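/- arXiv:1812.06626 — 3 statements merged into one kernel-verified Lean document; each statement's English description precedes it below -/
import Mathlib

section
/- Let λ > 0 and let F₁, …, Fₙ be classifiers, where Fᵢ : X → Yᵢ has oracle O_{Fᵢ} : X → Yᵢ and each Fᵢ is λ-resilient. Let G : (Y₁ × ⋯ × Yₙ) → Z be a classifier on n-tuples of feature labels with oracle O_G : (Y₁ × ⋯ × Yₙ) → Z, and suppose there is a mapping O_L : Z → Y₁ × ⋯ × Yₙ satisfying O_L(O_G(t)) = t for every tuple t (O_L inverts the oracle O_G) and O_L(G(t)) = t for every tuple t (G agrees with its oracle). Define the parallel composition R : X → Z by R(x) = G(⟨F₁(x), …, Fₙ(x)⟩) and its oracle by O_R(x) = O_G(⟨O_{F₁}(x), …, O_{Fₙ}(x)⟩). Then for every input x ∈ X and all labels z₁, z₂ ∈ Z with O_L(z₁) ≠ O_L(z₂) and R(x) = z₁, there is no perturbation γ ∈ X with 0 < ‖γ‖ < λ such that R(x+γ) = z₂ and O_R(x) = O_R(x+γ) = z₂. (Parallel Composition Resilience theorem.) -/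
/-- An input `x` is `lam`-adversarial for classifier `F` with oracle `O`. -/
def Adversarial {X Y : Type*} [SeminormedAddCommGroup X]
    (F O : X → Y) (lam : ℝ) (x : X) : Prop :=
  F x ≠ O x ∧ ∃ γ : X, ‖γ‖ ≤ lam ∧ F (x + γ) = O (x + γ) ∧ O (x + γ) = O x

/-- `F` is `lam`-resilient with respect to oracle `O`: no `lam`-adversarial inputs. -/
def Resilient {X Y : Type*} [SeminormedAddCommGroup X]
    (F O : X → Y) (lam : ℝ) : Prop :=
  ∀ x : X, ¬ Adversarial F O lam x

theorem Resilient.pi {ι X : Type*} [SeminormedAddCommGroup X] {Y : ι → Type*} {lam : ℝ}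
    {F OF : ∀ i, X → Y i} (hF : ∀ i, Resilient (F i) (OF i) lam) :
    Resilient (fun x i => F i x) (fun x i => OF i x) lam := by
  rintro x ⟨hne, γ, hγ, hcorrect, hstable⟩
  obtain ⟨i, hi⟩ := Function.ne_iff.mp hne
  exact hF i x ⟨hi, γ, hγ, congrFun hcorrect i, congrFun hstable i⟩

theorem parallel_composition_resilience_general {ι X Z : Type*} [SeminormedAddCommGroup X]
    {Y : ι → Type*} {lam : ℝ} {F OF : ∀ i, X → Y i}
    (hF : ∀ i, Resilient (F i) (OF i) lam)
    {G OG : (∀ i, Y i) → Z} {OL : Z → ∀ i, Y i}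
    (hinv : Function.LeftInverse OL OG) (hagree : Function.LeftInverse OL G)
    {R OR : X → Z} (hR : ∀ x, R x = G (fun i => F i x))
    (hOR : ∀ x, OR x = OG (fun i => OF i x)) :
    Resilient (OL ∘ R) (OL ∘ OR) lam := by
  have decode_R : OL ∘ R = fun x i => F i x :=
    funext fun x => (congrArg OL (hR x)).trans (hagree _)
  have decode_OR : OL ∘ OR = fun x i => OF i x :=
    funext fun x => (congrArg OL (hOR x)).trans (hinv _)
  rw [decode_R, decode_OR]
  exact Resilient.pi hF

theorem parallel_composition_resilience
    {X Z : Type*} [SeminormedAddCommGroup X]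
    (n : ℕ) (Y : Fin n → Type*)
    (lam : ℝ) (hlam : 0 < lam)
    (F : ∀ i : Fin n, X → Y i) (OF : ∀ i : Fin n, X → Y i)
    (hF : ∀ i : Fin n, Resilient (F i) (OF i) lam)
    (G : (∀ i : Fin n, Y i) → Z) (OG : (∀ i : Fin n, Y i) → Z)
    (OL : Z → ∀ i : Fin n, Y i)
    (hinv : ∀ t : ∀ i : Fin n, Y i, OL (OG t) = t)
    (hagree : ∀ t : ∀ i : Fin n, Y i, OL (G t) = t)
    (R : X → Z) (hR : ∀ x : X, R x = G (fun i => F i x))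
    (OR : X → Z) (hOR : ∀ x : X, OR x = OG (fun i => OF i x)) :
    ∀ (x : X) (z₁ z₂ : Z), OL z₁ ≠ OL z₂ → R x = z₁ →
      ¬ ∃ γ : X, 0 < ‖γ‖ ∧ ‖γ‖ < lam ∧
        R (x + γ) = z₂ ∧ OR x = OR (x + γ) ∧ OR (x + γ) = z₂ := by
  rintro x _ _ hne rfl ⟨γ, _, hγ, hcorrect, hstable, rfl⟩
  exact parallel_composition_resilience_general hF hinv hagree hR hOR x
    ⟨hne.trans_eq (congrArg OL hstable.symm), γ, hγ.le,
      congrArg OL hcorrect, congrArg OL hstable.symm⟩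
end

section
/- Let λ > 0 and suppose the classifier F : X → Y is λ-resilient with respect to its oracle O_F. Let G : Y → Z be a classifier with oracle O_G : Y → Z, and suppose there is a mapping O_L : Z → Y with O_L(O_G(y)) = y and O_L(G(y)) = y for every y ∈ Y. Define R = G ∘ F and O_R = O_G ∘ O_F. Then for every input x ∈ X and every perturbation γ ∈ X with 0 < ‖γ‖ < λ, if R(x+γ) = O_R(x+γ) and O_R(x+γ) = O_R(x), then O_L(R(x)) = O_L(R(x+γ)); that is, any successful attack within distortion λ on the composed classifier cannot change the extracted feature label, so attacks are only possible between output classes that share the same extracted feature. -/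
/-!
A common left inverse of `G` and `OG` lets one cancel the second stage, so a successful
perturbation of the composition is a successful perturbation of `F`. Resilience of `F` then makes
the extracted feature correct, and the correct label at `x + γ` carries over to `x`: the
composition is itself resilient.
-/

theorem eq_of_common_leftInverse {α β : Type*} {f g : α → β} {l : β → α}
    (hf : Function.LeftInverse l f) (hg : Function.LeftInverse l g) {a b : α}
    (h : f a = g b) : a = b := by
  rw [← hf a, h, hg b]

namespace Resilient

variable {X Y : Type*} [SeminormedAddCommGroup X] {F O : X → Y} {lam : ℝ} {x γ : X}

theorem apply_eq_oracle (hF : Resilient F O lam) (hγ : ‖γ‖ ≤ lam)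
    (hcorrect : F (x + γ) = O (x + γ)) (horacle : O (x + γ) = O x) : F x = O x :=
  by_contra fun hne => hF x ⟨hne, γ, hγ, hcorrect, horacle⟩

theorem apply_eq_apply_add (hF : Resilient F O lam) (hγ : ‖γ‖ ≤ lam)
    (hcorrect : F (x + γ) = O (x + γ)) (horacle : O (x + γ) = O x) : F x = F (x + γ) :=
  calc
    F x = O x := hF.apply_eq_oracle hγ hcorrect horacle
    _ = O (x + γ) := horacle.symm
    _ = F (x + γ) := hcorrect.symm

theorem comp {Z : Type*} {G OG : Y → Z} {OL : Z → Y} (hF : Resilient F O lam)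
    (hG : Function.LeftInverse OL G) (hOG : Function.LeftInverse OL OG) :
    Resilient (G ∘ F) (OG ∘ O) lam := by
  rintro x ⟨hne, γ, hγ, hcorrect, horacle⟩
  have hFcorrect : F (x + γ) = O (x + γ) := eq_of_common_leftInverse hG hOG hcorrect
  have hOsame : O (x + γ) = O x := hOG.injective horacle
  have hFsame : F x = F (x + γ) := hF.apply_eq_apply_add hγ hFcorrect hOsame
  exact hne <| calc
    G (F x) = G (F (x + γ)) := congrArg G hFsame
    _ = OG (O (x + γ)) := hcorrect
    _ = OG (O x) := horacle

end Resilient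

theorem serial_composition_attack_preserves_feature
    {X Y Z : Type*} [SeminormedAddCommGroup X]
    (lam : ℝ) (hlam : 0 < lam)
    (F : X → Y) (OF : X → Y) (hF : Resilient F OF lam)
    (G : Y → Z) (OG : Y → Z) (OL : Z → Y)
    (hinv : ∀ y : Y, OL (OG y) = y)
    (hagree : ∀ y : Y, OL (G y) = y)
    (R : X → Z) (hR : ∀ x : X, R x = G (F x))
    (OR : X → Z) (hOR : ∀ x : X, OR x = OG (OF x)) :
    ∀ (x γ : X), 0 < ‖γ‖ → ‖γ‖ < lam →
      R (x + γ) = OR (x + γ) → OR (x + γ) = OR x →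
      OL (R x) = OL (R (x + γ)) := by
  obtain rfl : R = G ∘ F := funext hR
  obtain rfl : OR = OG ∘ OF := funext hOR
  intro x γ _ hγ hcorrect horacle
  exact congrArg OL ((hF.comp hagree hinv).apply_eq_apply_add hγ.le hcorrect horacle)
end

section
/- Let λ > 0 and let F₁, …, Fₙ be classifiers, where Fᵢ : X → Yᵢ has oracle O_{Fᵢ} and each Fᵢ is λ-resilient. Let G : (Y₁ × ⋯ × Yₙ) → Z have oracle O_G, and suppose there is a mapping O_L : Z → Y₁ × ⋯ × Yₙ with O_L(O_G(t)) = t and O_L(G(t)) = t for every tuple t. Define R(x) = G(⟨F₁(x), …, Fₙ(x)⟩) and O_R(x) = O_G(⟨O_{F₁}(x), …, O_{Fₙ}(x)⟩). Then for every input x ∈ X and every perturbation γ ∈ X with 0 < ‖γ‖ < λ, if R(x+γ) = O_R(x+γ) and O_R(x+γ) = O_R(x), then O_L(R(x)) = O_L(R(x+γ)); that is, any successful attack within distortion λ on the composed classifier cannot change the tuple of extracted feature labels, so attacks are only possible between output classes that share the same set of extracted features. -/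
theorem eq_of_apply_eq_of_leftInverse {α β : Type*} {g h : α → β} {f : β → α}
    (hg : Function.LeftInverse f g) (hh : Function.LeftInverse f h) {a b : α}
    (hab : g a = h b) : a = b :=
  calc
    a = f (g a) := (hg a).symm
    _ = f (h b) := congrArg f hab
    _ = b := hh b

namespace Resilient

variable {X : Type*} [SeminormedAddCommGroup X] {lam : ℝ}

theorem eq_oracle_of_add {Y : Type*} {F O : X → Y} (hF : Resilient F O lam) {x γ : X}
    (hγ : ‖γ‖ ≤ lam) (hcorrect : F (x + γ) = O (x + γ)) (hlabel : O (x + γ) = O x) :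
    F x = O x := by
  by_contra hne
  exact hF x ⟨hne, γ, hγ, hcorrect, hlabel⟩

theorem pi_s6 {ι : Type*} {Y : ι → Type*} {F O : ∀ i, X → Y i}
    (hF : ∀ i, Resilient (F i) (O i) lam) :
    Resilient (fun x i => F i x) (fun x i => O i x) lam := by
  rintro x ⟨hne, γ, hγ, hcorrect, hlabel⟩
  exact hne <| funext fun i =>
    (hF i).eq_oracle_of_add hγ (congrFun hcorrect i) (congrFun hlabel i)

/-- `OL` decodes agreement of outputs into agreement of features, so `F` is correct at `x + γ` and
the true label has not moved; resilience then carries correctness from `x + γ` back to `x`. -/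
theorem apply_eq_apply_add_of_leftInverse {Y Z : Type*} {F O : X → Y}
    (hF : Resilient F O lam) {G OG : Y → Z} {OL : Z → Y}
    (hG : Function.LeftInverse OL G) (hOG : Function.LeftInverse OL OG) {x γ : X}
    (hγ : ‖γ‖ ≤ lam) (hcorrect : G (F (x + γ)) = OG (O (x + γ)))
    (hlabel : OG (O (x + γ)) = OG (O x)) : F x = F (x + γ) := by
  have hfeatures : F (x + γ) = O (x + γ) := eq_of_apply_eq_of_leftInverse hG hOG hcorrect
  have horacle : O (x + γ) = O x := hOG.injective hlabel
  calc
    F x = O x := hF.eq_oracle_of_add hγ hfeatures horacle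
    _ = O (x + γ) := horacle.symm
    _ = F (x + γ) := hfeatures.symm

end Resilient

theorem parallel_composition_attack_preserves_features_general
    {X Z ι : Type*} [SeminormedAddCommGroup X] {Y : ι → Type*} {lam : ℝ}
    {F OF : ∀ i, X → Y i} (hF : ∀ i, Resilient (F i) (OF i) lam)
    {G OG : (∀ i, Y i) → Z} {OL : Z → ∀ i, Y i}
    (hinv : Function.LeftInverse OL OG) (hagree : Function.LeftInverse OL G)
    {R : X → Z} (hR : ∀ x, R x = G (fun i => F i x))
    {OR : X → Z} (hOR : ∀ x, OR x = OG (fun i => OF i x))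
    {x γ : X} (hγ : ‖γ‖ ≤ lam) (hcorrect : R (x + γ) = OR (x + γ))
    (hlabel : OR (x + γ) = OR x) : OL (R x) = OL (R (x + γ)) := by
  simp only [hR, hOR] at hcorrect hlabel ⊢
  exact congrArg (OL ∘ G) <|
    (Resilient.pi_s6 hF).apply_eq_apply_add_of_leftInverse hagree hinv hγ hcorrect hlabel

theorem parallel_composition_attack_preserves_features
    {X Z : Type*} [SeminormedAddCommGroup X]
    (n : ℕ) (Y : Fin n → Type*)
    (lam : ℝ) (hlam : 0 < lam)
    (F : ∀ i : Fin n, X → Y i) (OF : ∀ i : Fin n, X → Y i)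
    (hF : ∀ i : Fin n, Resilient (F i) (OF i) lam)
    (G : (∀ i : Fin n, Y i) → Z) (OG : (∀ i : Fin n, Y i) → Z)
    (OL : Z → ∀ i : Fin n, Y i)
    (hinv : ∀ t : ∀ i : Fin n, Y i, OL (OG t) = t)
    (hagree : ∀ t : ∀ i : Fin n, Y i, OL (G t) = t)
    (R : X → Z) (hR : ∀ x : X, R x = G (fun i => F i x))
    (OR : X → Z) (hOR : ∀ x : X, OR x = OG (fun i => OF i x)) :
    ∀ (x γ : X), 0 < ‖γ‖ → ‖γ‖ < lam →
      R (x + γ) = OR (x + γ) → OR (x + γ) = OR x →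
      OL (R x) = OL (R (x + γ)) :=
  fun _ _ _ hγ hcorrect hlabel =>
    parallel_composition_attack_preserves_features_general
      hF hinv hagree hR hOR hγ.le hcorrect hlabel
end
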